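/- Let 𝐮 be the standard sequence over {a, b} whose slope has continued fraction expansion θ = [0, 1, 3, 2, 2, 2, …] (partial quotients a₁ = 1, a₂ = 3, and aₙ = 2 for all n ≥ 3), and let 𝐱_{12} = colour(𝐮, (123456)^ω, (1′2′3′4′5′6′)^ω). Then 𝐱_{12} is a balanced sequence over an alphabet of 12 letters whose critical exponent equals E(𝐱_{12}) = 11/10. -/

import Mathlib

open Filter
open scoped ENNReal

namespace BalancedCE

variable {α : Type*} {β : Type*}

/-- The factor of `v` of length `n` starting at position `i`. -/
def factorAt (v : ℕ → α) (i n : ℕ) : List α := (List.range n).map fun k => v (i + k)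

/-- `u` is a factor of the sequence `v`. -/
def IsFactor (v : ℕ → α) (u : List α) : Prop := ∃ i, factorAt v i u.length = u

/-- The word `w` occurs in the sequence `v` at position `i`. -/
def OccursAt (v : ℕ → α) (w : List α) (i : ℕ) : Prop := factorAt v i w.length = w

/-- A sequence is balanced if counts of each letter in equal-length factors differ by at most 1. -/
def Balanced [DecidableEq α] (v : ℕ → α) : Prop :=
  ∀ (a : α) (u w : List α), IsFactor v u → IsFactor v w → u.length = w.length →
    |(u.count a : ℤ) - (w.count a : ℤ)| ≤ 1

def EventuallyPeriodic (v : ℕ → α) : Prop :=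
  ∃ p, 0 < p ∧ ∃ N, ∀ n, N ≤ n → v (n + p) = v n

def Recurrent (v : ℕ → α) : Prop :=
  ∀ u : List α, IsFactor v u → ∀ N : ℕ, ∃ i, N ≤ i ∧ OccursAt v u i

/-- `i < j` are consecutive occurrences of the letter `a` in `v`. -/
def ConsecOcc (v : ℕ → α) (a : α) (i j : ℕ) : Prop :=
  i < j ∧ v i = a ∧ v j = a ∧ ∀ k, i < k → k < j → v k ≠ a

/-- `p` is a period of the finite word `z` (i.e. `z` is a prefix of `u^ω` with `|u| = p`). -/
def IsPeriod (z : List α) (p : ℕ) : Prop :=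
  0 < p ∧ ∀ i, i + p < z.length → z[i]? = z[i + p]?

/-- The minimal period of a finite word. -/
noncomputable def minPeriod (z : List α) : ℕ := sInf {p | IsPeriod z p}

/-- The exponent of a finite word: its length divided by its minimal period. -/
noncomputable def expE (z : List α) : ℝ≥0∞ := (z.length : ℝ≥0∞) / (minPeriod z : ℝ≥0∞)

/-- The critical exponent of a sequence: the supremum of exponents of nonempty factors. -/
noncomputable def criticalExponent (v : ℕ → α) : ℝ≥0∞ :=
  ⨆ (z : List α) (_ : IsFactor v z ∧ z ≠ []), expE z

/-- A Pansiot sequence over a `d`-letter alphabet. -/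
def Pansiot (d : ℕ) (v : ℕ → α) : Prop :=
  (∀ i : ℕ, (factorAt v i (d - 1)).Nodup) ∧
  ∀ (a : α) (i j : ℕ), ConsecOcc v a i j → v (i + 1) ≠ v (j + 1)

/-- The letter `a` has frequency `ρ` in the sequence `v`. -/
def HasFreq [DecidableEq α] (v : ℕ → α) (a : α) (ρ : ℝ) : Prop :=
  Tendsto (fun n => ((factorAt v 0 n).count a : ℝ) / n) atTop (nhds ρ)

/-- Factor complexity of a sequence. -/
noncomputable def complexity (v : ℕ → α) (n : ℕ) : ℕ :=
  Set.ncard {u : List α | IsFactor v u ∧ u.length = n}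

/-- Sturmian sequences: aperiodic binary sequences of factor complexity `n + 1`.
Convention: the letter `a` is `false`, the letter `b` is `true`. -/
def Sturmian (u : ℕ → Bool) : Prop :=
  ¬ EventuallyPeriodic u ∧ ∀ n, complexity u n = n + 1

/-- Prepending a letter to a sequence. -/
def consSeq (c : α) (v : ℕ → α) : ℕ → α := fun n =>
  match n with
  | 0 => c
  | Nat.succ m => v m

/-- A standard sequence: a Sturmian sequence `u` such that `a·u` and `b·u` are Sturmian. -/
def IsStandard (u : ℕ → Bool) : Prop :=
  Sturmian u ∧ Sturmian (consSeq false u) ∧ Sturmian (consSeq true u)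

/-- The slope of a binary sequence, with the convention `ρ_b > ρ_a` (`a = false`, `b = true`). -/
def HasSlope (u : ℕ → Bool) (θ : ℝ) : Prop :=
  ∃ ρa ρb : ℝ, HasFreq u false ρa ∧ HasFreq u true ρb ∧ ρa < ρb ∧ θ = ρa / ρb

/-- `θ` has the (infinite) continued fraction expansion `[0; a 1, a 2, a 3, …]`:
there are complete quotients' fractional parts `t n ∈ (0,1)` with `t 0 = θ` and
`1 / t n = a (n+1) + t (n+1)` for all `n`. (The value `a 0` is irrelevant.) -/
def HasCF (θ : ℝ) (a : ℕ → ℕ) : Prop :=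
  ∃ t : ℕ → ℝ, t 0 = θ ∧ ∀ n, 0 < t n ∧ t n < 1 ∧ 1 / t n = (a (n + 1) : ℝ) + t (n + 1)

/-- Number of positions `< n` where `u` takes the value `c`. -/
def countBefore (u : ℕ → Bool) (c : Bool) (n : ℕ) : ℕ :=
  ((List.range n).filter fun i => u i = c).length

/-- The colouring of a binary sequence `u` by `y` (on the `a = false` positions)
and `y'` (on the `b = true` positions). -/
def colour (u : ℕ → Bool) (y : ℕ → α) (y' : ℕ → β) : ℕ → α ⊕ β := fun n =>
  if u n = false then Sum.inl (y (countBefore u false n))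
  else Sum.inr (y' (countBefore u true n))

/-- A constant gap sequence: periodic, and consecutive occurrences of each occurring
letter are at a constant distance. -/
def ConstantGap (y : ℕ → α) : Prop :=
  (∃ p, 0 < p ∧ ∀ n, y (n + p) = y n) ∧
  ∀ c : α, (∃ i, y i = c) → ∃ g, 0 < g ∧ ∀ i j, ConsecOcc y c i j → j - i = g

/-- The discolouration (projection) map: letters of the first alphabet go to `a = false`,
letters of the second alphabet go to `b = true`. -/
def proj : α ⊕ β → Bool := Sum.elim (fun _ => false) (fun _ => true)

/-- `v` is a return word to `w` in the sequence `z`. -/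
def IsReturnWord (z : ℕ → α) (w v : List α) : Prop :=
  ∃ i j : ℕ, i < j ∧ OccursAt z w i ∧ OccursAt z w j ∧
    (∀ k, i < k → k < j → ¬ OccursAt z w k) ∧ v = factorAt z i (j - i)

def RightSpecial (z : ℕ → α) (w : List α) : Prop :=
  ∃ a b : α, a ≠ b ∧ IsFactor z (w ++ [a]) ∧ IsFactor z (w ++ [b])

def LeftSpecial (z : ℕ → α) (w : List α) : Prop :=
  ∃ a b : α, a ≠ b ∧ IsFactor z (a :: w) ∧ IsFactor z (b :: w)

def Bispecial (z : ℕ → α) (w : List α) : Prop := LeftSpecial z w ∧ RightSpecial z w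

/-- `o` enumerates, in increasing order, all occurrences of `w` in `z`. -/
def IsOccEnum (z : ℕ → α) (w : List α) (o : ℕ → ℕ) : Prop :=
  StrictMono o ∧ (∀ n, OccursAt z w (o n)) ∧ ∀ i, OccursAt z w i → ∃ n, o n = i

/-- The derived sequence of `z` with respect to the occurrence enumeration `o` of a factor:
its `n`-th letter is the return word between the `n`-th and `(n+1)`-st occurrences. -/
def derivedSeq (z : ℕ → α) (o : ℕ → ℕ) : ℕ → List α :=
  fun n => factorAt z (o n) (o (n + 1) - o n)

/-- The slope of a sequence over a two-letter alphabet: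
the ratio of the smaller letter frequency to the larger one. -/
def HasSlope2 {γ : Type*} [DecidableEq γ] (z : ℕ → γ) (θ : ℝ) : Prop :=
  ∃ (c c' : γ) (ρ ρ' : ℝ), c ≠ c' ∧ (∀ n, z n = c ∨ z n = c') ∧
    HasFreq z c ρ ∧ HasFreq z c' ρ' ∧ ρ < ρ' ∧ θ = ρ / ρ'

/-- The purely cyclic constant gap sequence `(0 1 ⋯ (δ-1))^ω` over `ZMod δ`. -/
def cyc (δ : ℕ) : ℕ → ZMod δ := fun n => (n : ZMod δ)

/-- The colouring `colour(u, (1 2 ⋯ δ)^ω, (1' 2' ⋯ δ')^ω)` over `2δ` letters. -/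
def colourCyc (δ : ℕ) (u : ℕ → Bool) : ℕ → ZMod δ ⊕ ZMod δ := colour u (cyc δ) (cyc δ)


/-! ### Part 1: combinatorics of standard sequences -/

theorem factorAt_succ (v : ℕ → α) (i n : ℕ) :
    factorAt v i (n + 1) = v i :: factorAt v (i + 1) n := by
  simp only [factorAt, List.range_succ_eq_map, List.map_cons, List.map_map, Nat.add_zero]
  congr 1
  apply List.map_congr_left
  intro k _
  simp only [Function.comp, Nat.succ_eq_add_one]
  congr 1
  omega

theorem factorAt_length (v : ℕ → α) (i n : ℕ) : (factorAt v i n).length = n := by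
  simp [factorAt]

theorem occ_nil (v : ℕ → α) (i : ℕ) : OccursAt v [] i := by
  simp [OccursAt, factorAt]

theorem occ_cons (v : ℕ → α) (x : α) (w : List α) (i : ℕ) :
    OccursAt v (x :: w) i ↔ v i = x ∧ OccursAt v w (i + 1) := by
  simp only [OccursAt, List.length_cons, factorAt_succ, List.cons.injEq]

theorem occ_append (v : ℕ → α) (w w' : List α) (i : ℕ) :
    OccursAt v (w ++ w') i ↔ OccursAt v w i ∧ OccursAt v w' (i + w.length) := by
  induction w generalizing i with
  | nil => simp [occ_nil]
  | cons x w ih =>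
    rw [List.cons_append, occ_cons, occ_cons, ih, List.length_cons, and_assoc]
    rw [show i + 1 + w.length = i + (w.length + 1) by omega]

theorem occ_factorAt (v : ℕ → α) (i n : ℕ) : OccursAt v (factorAt v i n) i := by
  simp [OccursAt, factorAt_length]

theorem factorAt_cons_succ (c : α) (v : ℕ → α) (i n : ℕ) :
    factorAt (consSeq c v) (i + 1) n = factorAt v i n := by
  simp only [factorAt]
  apply List.map_congr_left
  intro k _
  rw [show i + 1 + k = (i + k) + 1 by omega]
  rfl

/-- Left special factors are exactly the prefixes. -/
def LSP (u : ℕ → Bool) : Prop :=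
  (∀ n c, IsFactor u (c :: factorAt u 0 n)) ∧
  ∀ w, IsFactor u (false :: w) → IsFactor u (true :: w) → OccursAt u w 0

def facs (v : ℕ → Bool) (n : ℕ) : Set (List Bool) := {w | IsFactor v w ∧ w.length = n}

theorem facs_cons (u : ℕ → Bool) (hu : IsStandard u) (c : Bool) (n : ℕ) :
    facs (consSeq c u) n = facs u n := by
  have h1 : (facs u n).ncard = n + 1 := hu.1.2 n
  have h2 : (facs (consSeq c u) n).ncard = n + 1 := by
    cases c
    · exact hu.2.1.2 n
    · exact hu.2.2.2 n
  symm
  apply Set.eq_of_subset_of_ncard_le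
  · rintro w ⟨⟨i, hi⟩, hw⟩
    exact ⟨⟨i + 1, by rw [factorAt_cons_succ, hi]⟩, hw⟩
  · omega
  · apply Set.finite_of_ncard_ne_zero
    omega

theorem isFactor_cons (u : ℕ → Bool) (hu : IsStandard u) (c : Bool) (w : List Bool) :
    IsFactor (consSeq c u) w ↔ IsFactor u w := by
  have := facs_cons u hu c w.length
  have h := Set.ext_iff.1 this w
  simpa [facs] using h

theorem lsp_of_standard (u : ℕ → Bool) (hu : IsStandard u) : LSP u := by
  have key : ∀ n c, IsFactor u (c :: factorAt u 0 n) := by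
    intro n c
    rw [← isFactor_cons u hu c]
    refine ⟨0, ?_⟩
    rw [List.length_cons, factorAt_length, factorAt_succ, factorAt_cons_succ]
    rfl
  refine ⟨key, ?_⟩
  intro w h0 h1
  set n := w.length with hn
  have c1 : (facs u n).ncard = n + 1 := hu.1.2 n
  have c2 : (facs u (n + 1)).ncard = n + 2 := hu.1.2 (n + 1)
  have f2 : (facs u (n + 1)).Finite := Set.finite_of_ncard_ne_zero (by omega)
  let A : Bool → Set (List Bool) := fun c => {v | c :: v ∈ facs u (n + 1)}
  have inj : ∀ c : Bool, Function.Injective (fun v : List Bool => c :: v) := by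
    intro c x y h
    simpa using h
  have fA : ∀ c, (A c).Finite := fun c => f2.preimage ((inj c).injOn)
  have sub : ∀ c, A c ⊆ facs u n := by
    rintro c v ⟨⟨i, hi⟩, hv⟩
    refine ⟨⟨i + 1, ?_⟩, by simpa using hv⟩
    rw [List.length_cons, factorAt_succ] at hi
    exact (List.cons.inj hi).2
  have un : A false ∪ A true = facs u n := by
    apply Set.Subset.antisymm (Set.union_subset (sub _) (sub _))
    rintro v ⟨⟨i, hi⟩, hv⟩
    have : IsFactor u (consSeq false u i :: v) := by
      rw [← isFactor_cons u hu false]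
      refine ⟨i, ?_⟩
      rw [List.length_cons, factorAt_succ, factorAt_cons_succ, hi]
    cases h : consSeq false u i
    · left
      rw [h] at this
      exact ⟨this, by simp [hv]⟩
    · right
      rw [h] at this
      exact ⟨this, by simp [hv]⟩
  have un2 : (fun v => false :: v) '' A false ∪ (fun v => true :: v) '' A true = facs u (n + 1) := by
    apply Set.Subset.antisymm
    · rintro _ (⟨v, hv, rfl⟩ | ⟨v, hv, rfl⟩)
      · exact hv
      · exact hv
    · rintro v hv
      match v, hv with
      | [], hv => exact absurd hv.2 (by simp)
      | false :: v, hv => exact Or.inl ⟨v, hv, rfl⟩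
      | true :: v, hv => exact Or.inr ⟨v, hv, rfl⟩
  have e1 : (A false).ncard + (A true).ncard = n + 2 := by
    rw [← c2, ← un2, Set.ncard_union_eq ?_ ((fA _).image _) ((fA _).image _),
      Set.ncard_image_of_injective _ (inj _), Set.ncard_image_of_injective _ (inj _)]
    rw [Set.disjoint_left]
    rintro _ ⟨v, _, rfl⟩ ⟨v', _, h⟩
    simp at h
  have e2 := Set.ncard_union_add_ncard_inter (A false) (A true) (fA _) (fA _)
  rw [un] at e2
  have e3 : (A false ∩ A true).ncard ≤ 1 := by omega
  rw [Set.ncard_le_one ((fA _).inter_of_left _)] at e3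
  have := e3 w ⟨⟨h0, by simp [hn]⟩, ⟨h1, by simp [hn]⟩⟩ (factorAt u 0 n)
    ⟨⟨key n false, by simp [factorAt_length]⟩, ⟨key n true, by simp [factorAt_length]⟩⟩
  rw [this]
  exact occ_factorAt u 0 n

/-! Desubstitution -/

theorem lsp_nodd (u : ℕ → Bool) (h : LSP u) (i : ℕ) : ¬ (u i = !u 0 ∧ u (i + 1) = !u 0) := by
  rintro ⟨h1, h2⟩
  have f1 : IsFactor u [!u 0, !u 0] := ⟨i, by
    show OccursAt u _ i
    simp [occ_cons, occ_nil, h1, h2]⟩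
  have hno : ¬ IsFactor u [u 0, !u 0] := by
    intro f2
    have : OccursAt u [!u 0] 0 := by
      cases hc : u 0
      · rw [hc] at f1 f2
        exact h.2 _ f2 f1
      · rw [hc] at f1 f2
        exact h.2 _ f1 f2
    simp [occ_cons] at this
  have hall : ∀ k, u k = u 0 := by
    intro k
    induction k with
    | zero => rfl
    | succ k ih =>
      by_contra hne
      apply hno
      refine ⟨k, ?_⟩
      show OccursAt u _ k
      simp only [occ_cons, occ_nil, ih, and_true, true_and]
      revert hne
      cases u (k + 1) <;> cases u 0 <;> simp
  have := hall i
  rw [this] at h1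
  simp at h1

/-- block starts -/
def blk (u : ℕ → Bool) : ℕ → ℕ
  | 0 => 0
  | k + 1 => if u (blk u k + 1) = u 0 then blk u k + 1 else blk u k + 2

def desub (u : ℕ → Bool) (k : ℕ) : Bool := u (blk u k + 1)

def subst (c : Bool) : List Bool → List Bool
  | [] => [c]
  | x :: w => if x = c then c :: subst c w else c :: (!c) :: subst c w

theorem blk_val (u : ℕ → Bool) (h : LSP u) (k : ℕ) : u (blk u k) = u 0 := by
  induction k with
  | zero => rfl
  | succ k ih =>
    rw [blk]
    split_ifs with hc
    · exact hc
    · have := lsp_nodd u h (blk u k + 1)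
      revert hc this
      rw [show blk u k + 1 + 1 = blk u k + 2 by omega]
      cases u (blk u k + 1) <;> cases u (blk u k + 2) <;> cases u 0 <;> simp

theorem blk_surj (u : ℕ → Bool) (i : ℕ) (hi : u i = u 0) : ∃ k, blk u k = i := by
  have : ∀ k i, u i = u 0 → i ≤ blk u k → ∃ k', blk u k' = i := by
    intro k
    induction k with
    | zero =>
      intro i _ h2
      exact ⟨0, by simp [blk] at h2 ⊢; omega⟩
    | succ k ih =>
      intro i h1 h2
      by_cases h3 : i ≤ blk u k
      · exact ih i h1 h3
      · refine ⟨k + 1, ?_⟩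
        rw [blk] at h2 ⊢
        split_ifs at h2 ⊢ with hc
        · omega
        · by_contra hne
          apply hc
          rw [show blk u k + 1 = i by omega]
          exact h1
  have mono : ∀ k, k ≤ blk u k := by
    intro k
    induction k with
    | zero => omega
    | succ k ih =>
      rw [blk]
      split_ifs <;> omega
  exact this i i hi (mono i)

theorem subst_occ (u : ℕ → Bool) (h : LSP u) (w : List Bool) (k : ℕ) :
    OccursAt u (subst (u 0) w) (blk u k) ↔ OccursAt (desub u) w k := by
  induction w generalizing k with
  | nil => simp [subst, occ_cons, occ_nil, blk_val u h]
  | cons x w ih =>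
    rw [subst, occ_cons (desub u), ← ih (k + 1), desub]
    have hhead : ∀ j, OccursAt u (subst (u 0) w) j → u j = u 0 := by
      intro j hj
      match w, hj with
      | [], hj => exact ((occ_cons _ _ _ _).1 hj).1
      | y :: w, hj =>
        rw [subst] at hj
        split_ifs at hj
        · exact ((occ_cons _ _ _ _).1 hj).1
        · exact ((occ_cons _ _ _ _).1 hj).1
    by_cases hx : x = u 0
    · rw [if_pos hx, occ_cons, hx]
      constructor
      · rintro ⟨_, h2⟩
        have h3 := hhead _ h2
        refine ⟨h3, ?_⟩
        rw [blk, if_pos h3]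
        exact h2
      · rintro ⟨h1, h2⟩
        rw [blk, if_pos h1] at h2
        exact ⟨blk_val u h k, h2⟩
    · have hx' : x = !u 0 := by
        revert hx
        cases x <;> cases u 0 <;> simp
      rw [if_neg hx, occ_cons, occ_cons, hx']
      constructor
      · rintro ⟨_, h2, h3⟩
        refine ⟨h2, ?_⟩
        rw [blk, if_neg (by rw [h2]; simp)]
        exact h3
      · rintro ⟨h1, h2⟩
        rw [blk, if_neg (by rw [h1]; simp)] at h2
        exact ⟨blk_val u h k, h1, h2⟩

theorem subst_head (c : Bool) (w : List Bool) : ∃ t, subst c w = c :: t := by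
  cases w with
  | nil => exact ⟨_, rfl⟩
  | cons x w =>
    rw [subst]
    split_ifs
    · exact ⟨_, rfl⟩
    · exact ⟨_, rfl⟩

theorem subst_factor (u : ℕ → Bool) (h : LSP u) (w : List Bool) :
    IsFactor (desub u) w ↔ IsFactor u (subst (u 0) w) := by
  constructor
  · rintro ⟨k, hk⟩
    exact ⟨blk u k, (subst_occ u h w k).2 hk⟩
  · rintro ⟨i, hi⟩
    have hi' : OccursAt u (subst (u 0) w) i := hi
    obtain ⟨t, ht⟩ := subst_head (u 0) w
    have h0 : u i = u 0 := by
      rw [ht, occ_cons] at hi'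
      exact hi'.1
    obtain ⟨k, rfl⟩ := blk_surj u i h0
    exact ⟨k, (subst_occ u h w k).1 hi'⟩

theorem subst_cons_c (c : Bool) (w : List Bool) : subst c (c :: w) = c :: subst c w := by
  simp [subst]

theorem subst_cons_d (c : Bool) (w : List Bool) :
    subst c ((!c) :: w) = c :: (!c) :: subst c w := by
  simp [subst]

/-- a factor starting with the isolated letter extends to the left -/
theorem ext_left (u : ℕ → Bool) (h : LSP u) (w : List Bool)
    (hf : IsFactor u ((!u 0) :: w)) : IsFactor u (u 0 :: (!u 0) :: w) := by
  obtain ⟨i, hi⟩ := hf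
  have hi' : OccursAt u _ i := hi
  have h1 := ((occ_cons _ _ _ _).1 hi').1
  match i, hi', h1 with
  | 0, _, h1 => simp at h1
  | i + 1, hi', h1 =>
    refine ⟨i, ?_⟩
    show OccursAt u _ i
    rw [occ_cons]
    refine ⟨?_, hi'⟩
    have := lsp_nodd u h i
    revert this h1
    cases u i <;> cases u (i + 1) <;> cases u 0 <;> simp

theorem factor_tail (u : ℕ → Bool) (x : Bool) (w : List Bool) (hf : IsFactor u (x :: w)) :
    IsFactor u w := by
  obtain ⟨i, hi⟩ := hf
  exact ⟨i + 1, ((occ_cons _ _ _ _).1 hi).2⟩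

theorem desub_lsp (u : ℕ → Bool) (h : LSP u) : LSP (desub u) := by
  constructor
  · intro n c
    have h0 : OccursAt u (subst (u 0) (factorAt (desub u) 0 n)) 0 :=
      (subst_occ u h _ 0).2 (occ_factorAt _ _ _)
    have h1 : ∀ c, IsFactor u (c :: subst (u 0) (factorAt (desub u) 0 n)) := by
      intro c
      have := h.1 (subst (u 0) (factorAt (desub u) 0 n)).length c
      rwa [h0] at this
    rw [subst_factor u h]
    by_cases hc : c = u 0
    · rw [hc, subst_cons_c]
      exact h1 _
    · have hc' : c = !u 0 := by
        revert hc
        cases c <;> cases u 0 <;> simp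
      rw [hc', subst_cons_d]
      exact ext_left u h _ (h1 _)
  · intro w h1 h2
    rw [subst_factor u h] at h1 h2
    have h3 : ∀ c, IsFactor u (subst (u 0) (c :: w)) := by
      intro c
      cases c
      · exact h1
      · exact h2
    have h4 := h3 (u 0)
    have h5 := h3 (!u 0)
    rw [subst_cons_c] at h4
    rw [subst_cons_d] at h5
    have h6 := factor_tail _ _ _ h5
    rw [← subst_occ u h w 0]
    apply h.2
    · cases hc : u 0
      · rw [hc] at h4
        exact h4
      · rw [hc] at h6
        exact h6
    · cases hc : u 0
      · rw [hc] at h6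
        exact h6
      · rw [hc] at h4
        exact h4

theorem parse (u : ℕ → Bool) (h : LSP u) (n : ℕ) (w : List Bool) (hn : w.length ≤ n)
    (hw : w ≠ []) (i : ℕ) (hi : OccursAt u (w ++ [!u 0]) i) (h0 : u i = u 0) :
    ∃ w', w = subst (u 0) w' ∧ w'.length < w.length := by
  induction n generalizing w i with
  | zero =>
    exact absurd (List.length_eq_zero_iff.1 (by omega)) hw
  | succ n ih =>
    match w, hw with
    | [x], _ =>
      simp only [List.cons_append, occ_cons] at hi
      exact ⟨[], by rw [subst, ← hi.1, h0], by simp⟩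
    | x :: y :: w2, _ =>
      simp only [List.cons_append, occ_cons] at hi
      obtain ⟨hx, hy, hi⟩ := hi
      by_cases hc : y = u 0
      · obtain ⟨w', e1, e2⟩ := ih (y :: w2) (by simp at hn ⊢; omega) (by simp) (i + 1)
          (by simp only [List.cons_append, occ_cons]; exact ⟨hy, hi⟩) (by rw [hy, hc])
        refine ⟨u 0 :: w', ?_, by simp at e2 ⊢; omega⟩
        rw [subst_cons_c, ← e1, ← hx, h0]
      · have hc' : y = !u 0 := by
          revert hc
          cases y <;> cases u 0 <;> simp
        have hnd := lsp_nodd u h (i + 1)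
        have hw2 : w2 ≠ [] := by
          rintro rfl
          simp only [List.nil_append, occ_cons] at hi
          exact hnd ⟨by rw [hy, hc'], hi.1⟩
        have hh : u (i + 1 + 1) = u 0 := by
          rw [hy, hc'] at hnd
          revert hnd
          cases u (i + 1 + 1) <;> cases u 0 <;> simp
        obtain ⟨w', e1, e2⟩ := ih w2 (by simp at hn ⊢; omega) hw2 (i + 1 + 1) hi hh
        refine ⟨(!u 0) :: w', ?_, by simp at e2 ⊢; omega⟩
        rw [subst_cons_d, ← e1, ← hx, h0, hc']

theorem subst_append (c : Bool) (w w' : List Bool) (t : List Bool) (ht : subst c w' = c :: t) :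
    subst c (w ++ w') = subst c w ++ t := by
  induction w with
  | nil => simpa [subst] using ht
  | cons x w ih =>
    simp only [List.cons_append, subst, ih]
    split_ifs <;> simp

theorem no_unbal (n : ℕ) (u : ℕ → Bool) (h : LSP u) (w : List Bool) (hn : w.length ≤ n)
    (h1 : ∀ c : Bool, IsFactor u (c :: (w ++ [c]))) : False := by
  induction n generalizing u w with
  | zero =>
    have : w = [] := List.length_eq_zero_iff.1 (by omega)
    subst this
    obtain ⟨i, hi⟩ := h1 (!u 0)
    have hi' : OccursAt u _ i := hi
    simp only [List.nil_append, occ_cons] at hi'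
    exact lsp_nodd u h i ⟨hi'.1, hi'.2.1⟩
  | succ n ih =>
    obtain ⟨i, hi⟩ := h1 (!u 0)
    have hi' : OccursAt u _ i := hi
    rw [occ_cons] at hi'
    have hnd := lsp_nodd u h i
    have hw : w ≠ [] := by
      rintro rfl
      simp only [List.nil_append, occ_cons] at hi'
      exact hnd ⟨hi'.1, hi'.2.1⟩
    have hh : u (i + 1) = u 0 := by
      rw [hi'.1] at hnd
      revert hnd
      cases u (i + 1) <;> cases u 0 <;> simp
    obtain ⟨w', e1, e2⟩ := parse u h _ w le_rfl hw (i + 1) hi'.2 hh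
    refine ih (desub u) (desub_lsp u h) w' (by omega) ?_
    intro c
    rw [subst_factor u h]
    by_cases hc : c = u 0
    · rw [hc, subst_cons_c, subst_append _ _ _ [u 0] (by simp [subst]), ← e1]
      exact h1 _
    · have hc' : c = !u 0 := by
        revert hc
        cases c <;> cases u 0 <;> simp
      rw [hc', subst_cons_d, subst_append _ _ _ [!u 0, u 0] (by simp [subst]), ← e1]
      apply ext_left u h
      refine ⟨i, ?_⟩
      show OccursAt u _ i
      rw [occ_cons]
      refine ⟨hi'.1, ?_⟩
      have h3 := hi'.2
      rw [occ_append] at h3 ⊢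
      refine ⟨h3.1, ?_⟩
      have h4 := h3.2
      simp only [occ_cons, occ_nil, and_true] at h4 ⊢
      refine ⟨h4, ?_⟩
      have := lsp_nodd u h (i + 1 + w.length)
      rw [h4] at this
      revert this
      cases u (i + 1 + w.length + 1) <;> cases u 0 <;> simp

/-! ### Part 2: counting and the mechanical formula -/

theorem cb_succ (u : ℕ → Bool) (c : Bool) (n : ℕ) :
    countBefore u c (n + 1) = countBefore u c n + if u n = c then 1 else 0 := by
  simp only [countBefore, List.range_succ, List.filter_append, List.length_append]
  congr 1
  by_cases h : u n = c <;> simp [h]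

theorem cb_zero (u : ℕ → Bool) (c : Bool) : countBefore u c 0 = 0 := rfl

theorem cb_sum (u : ℕ → Bool) (n : ℕ) : countBefore u true n + countBefore u false n = n := by
  induction n with
  | zero => rfl
  | succ n ih =>
    rw [cb_succ, cb_succ]
    cases u n <;> simp <;> omega

theorem cb_factor (u : ℕ → Bool) (c : Bool) (i n : ℕ) :
    countBefore u c i + (factorAt u i n).count c = countBefore u c (i + n) := by
  induction n generalizing i with
  | zero => simp [factorAt]
  | succ n ih =>
    have h := ih (i + 1)
    rw [cb_succ] at h
    rw [factorAt_succ, List.count_cons, show i + (n + 1) = i + 1 + n by omega, ← h]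
    by_cases h : u i = c <;> simp [h] <;> omega

theorem cb_bal (u : ℕ → Bool) (h : LSP u) (n : ℕ) : ∀ i j,
    countBefore u true (i + n) + countBefore u true j ≤
      countBefore u true (j + n) + countBefore u true i + 1 := by
  induction n using Nat.strong_induction_on with
  | _ n ih =>
  intro i j
  by_contra hcon
  push Not at hcon
  have key : ∀ k, 0 < k → k < n → countBefore u true (i + k) + countBefore u true j =
      countBefore u true (j + k) + countBefore u true i + 1 := by
    intro k hk0 hk
    have h1 := ih k hk i j
    have h2 := ih (n - k) (by omega) (i + k) (j + k)
    rw [show i + k + (n - k) = i + n by omega, show j + k + (n - k) = j + n by omega] at h2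
    omega
  have hn : 2 ≤ n := by
    by_contra hn
    have : n = 0 ∨ n = 1 := by omega
    rcases this with rfl | rfl
    · simp at hcon
      omega
    · rw [cb_succ, cb_succ] at hcon
      split_ifs at hcon <;> omega
  obtain ⟨m, rfl⟩ : ∃ m, n = m + 2 := ⟨n - 2, by omega⟩
  have hfirst := key 1 (by omega) (by omega)
  rw [cb_succ, cb_succ] at hfirst
  have hui : u i = true := by
    by_contra hh
    rw [if_neg hh] at hfirst
    omega
  have huj : u j = false := by
    by_contra hh
    have hh : u j = true := by simpa using hh
    rw [if_pos hh, if_pos hui] at hfirst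
    omega
  have hl := key (m + 1) (by omega) (by omega)
  rw [show i + (m + 2) = i + (m + 1) + 1 by omega, show j + (m + 2) = j + (m + 1) + 1 by omega,
    cb_succ, cb_succ u true (i + (m + 1))] at hcon
  have huil : u (i + (m + 1)) = true := by
    by_contra hh
    rw [if_neg hh] at hcon
    omega
  have hujl : u (j + (m + 1)) = false := by
    by_contra hh
    have hh : u (j + (m + 1)) = true := by simpa using hh
    rw [if_pos hh] at hcon
    split_ifs at hcon <;> omega
  have hw : factorAt u (i + 1) m = factorAt u (j + 1) m := by
    simp only [factorAt]
    apply List.map_congr_left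
    intro k hk
    have hk := List.mem_range.1 hk
    have a1 := key (k + 1) (by omega) (by omega)
    have a2 := key (k + 2) (by omega) (by omega)
    rw [show i + (k + 2) = i + (k + 1) + 1 by omega, show j + (k + 2) = j + (k + 1) + 1 by omega,
      cb_succ, cb_succ u true (j + (k + 1))] at a2
    rw [show i + 1 + k = i + (k + 1) by omega, show j + 1 + k = j + (k + 1) by omega]
    revert a2
    cases u (i + (k + 1)) <;> cases u (j + (k + 1)) <;> simp <;> omega
  refine no_unbal _ u h (factorAt u (i + 1) m) le_rfl ?_
  intro c
  cases c
  · refine ⟨j, ?_⟩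
    show OccursAt u _ j
    rw [hw, occ_cons, occ_append, occ_cons, factorAt_length]
    exact ⟨huj, occ_factorAt _ _ _, by rw [← hujl]; congr 1; omega, occ_nil _ _⟩
  · refine ⟨i, ?_⟩
    show OccursAt u _ i
    rw [occ_cons, occ_append, occ_cons, factorAt_length]
    exact ⟨hui, occ_factorAt _ _ _, by rw [← huil]; congr 1; omega, occ_nil _ _⟩

theorem cb_window (u : ℕ → Bool) (h : LSP u) (n i : ℕ) :
    countBefore u true n + countBefore u true i ≤ countBefore u true (i + (n + 1)) ∧
    countBefore u true (i + (n + 1)) ≤ countBefore u true n + countBefore u true i + 1 := by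
  have key : ∀ c : Bool, ∃ j, countBefore u true (j + (n + 1)) =
      countBefore u true j + countBefore u true n + if c = true then 1 else 0 := by
    intro c
    obtain ⟨j, hj⟩ := h.1 n c
    refine ⟨j, ?_⟩
    rw [List.length_cons, factorAt_length] at hj
    have h0 := cb_factor u true 0 n
    rw [cb_zero] at h0
    rw [← cb_factor, hj, List.count_cons]
    simp at h0 ⊢
    omega
  obtain ⟨j, hj⟩ := key true
  obtain ⟨j', hj'⟩ := key false
  have b1 := cb_bal u h (n + 1) j i
  have b2 := cb_bal u h (n + 1) i j'
  simp at hj hj'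
  omega

theorem cb_mult (u : ℕ → Bool) (h : LSP u) (n k : ℕ) :
    k * countBefore u true n ≤ countBefore u true (k * (n + 1)) ∧
    countBefore u true (k * (n + 1)) ≤ k * (countBefore u true n + 1) := by
  induction k with
  | zero => simp [cb_zero]
  | succ k ih =>
    have := cb_window u h n (k * (n + 1))
    rw [show (k + 1) * (n + 1) = k * (n + 1) + (n + 1) by ring]
    rw [show (k + 1) * countBefore u true n = k * countBefore u true n + countBefore u true n by ring,
      show (k + 1) * (countBefore u true n + 1)
        = k * (countBefore u true n + 1) + (countBefore u true n + 1) by ring]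
    omega

theorem cb_floor (u : ℕ → Bool) (h : LSP u) (r : ℝ) (hr : HasFreq u true r) (hirr : Irrational r)
    (n : ℕ) : (countBefore u true n : ℤ) = ⌊((n : ℝ) + 1) * r⌋ := by
  have hr' : Tendsto (fun n => (countBefore u true n : ℝ) / n) atTop (nhds r) := by
    refine hr.congr ?_
    intro n
    have := cb_factor u true 0 n
    rw [cb_zero] at this
    simp only [zero_add] at this
    rw [this]
  have hpos : (0 : ℝ) < (n : ℝ) + 1 := by positivity
  have hsub : Tendsto (fun k : ℕ => k * (n + 1)) atTop atTop :=
    tendsto_id.atTop_mul_const' (by omega)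
  have h2 := hr'.comp hsub
  have hlo : (countBefore u true n : ℝ) / ((n : ℝ) + 1) ≤ r := by
    refine ge_of_tendsto h2 ?_
    filter_upwards [eventually_gt_atTop 0] with k hk
    have hk' : (0 : ℝ) < k := by exact_mod_cast hk
    have := (cb_mult u h n k).1
    simp only [Function.comp]
    push_cast
    rw [div_le_div_iff₀ hpos (by positivity)]
    have h3 : (k : ℝ) * countBefore u true n ≤ countBefore u true (k * (n + 1)) := by
      exact_mod_cast this
    nlinarith
  have hhi : r ≤ ((countBefore u true n : ℝ) + 1) / ((n : ℝ) + 1) := by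
    refine le_of_tendsto h2 ?_
    filter_upwards [eventually_gt_atTop 0] with k hk
    have hk' : (0 : ℝ) < k := by exact_mod_cast hk
    have := (cb_mult u h n k).2
    simp only [Function.comp]
    push_cast
    rw [div_le_div_iff₀ (by positivity) hpos]
    have h3 : (countBefore u true (k * (n + 1)) : ℝ) ≤ (k : ℝ) * (countBefore u true n + 1) := by
      exact_mod_cast this
    nlinarith
  symm
  rw [Int.floor_eq_iff]
  rw [div_le_iff₀ hpos] at hlo
  rw [le_div_iff₀ hpos] at hhi
  push_cast
  refine ⟨by linarith, lt_of_le_of_ne (by linarith) ?_⟩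
  intro heq
  have : Irrational (((n + 1 : ℕ) : ℝ) * r) := hirr.natCast_mul (by omega)
  apply this.ne_nat (countBefore u true n + 1)
  push_cast
  exact heq

/-! ### Part 3: the frequency -/

/-- the frequency of the letter `b` -/
noncomputable def rho : ℝ := (11 - √2) / 17

theorem cf_value (θ : ℝ) (a : ℕ → ℕ) (hcf : HasCF θ a)
    (ha1 : a 1 = 1) (ha2 : a 2 = 3) (ha : ∀ n, 3 ≤ n → a n = 2) : θ = (4 + √2) / 7 := by
  obtain ⟨t, ht0, ht⟩ := hcf
  have hs : √2 * √2 = 2 := Real.mul_self_sqrt (by norm_num)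
  have hs1 : (1.4 : ℝ) < √2 := by
    apply Real.lt_sqrt_of_sq_lt; norm_num
  have hs2 : √2 < (1.5 : ℝ) := by
    rw [Real.sqrt_lt' (by norm_num)]; norm_num
  have step : ∀ n, |t (n + 2) - (√2 - 1)| ≤ 1 / 2 * |t (n + 3) - (√2 - 1)| := by
    intro n
    obtain ⟨h1, h2, h3⟩ := ht (n + 2)
    obtain ⟨h4, h5, -⟩ := ht (n + 3)
    rw [ha (n + 2 + 1) (by omega)] at h3
    have h6 : t (n + 2) * (2 + t (n + 3)) = 1 := by
      have : t (n + 2) * (1 / t (n + 2)) = 1 := by field_simp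
      rw [h3] at this
      exact_mod_cast this
    have h7 : t (n + 2) - (√2 - 1) = - (t (n + 2) * (√2 - 1)) * (t (n + 3) - (√2 - 1)) := by
      linear_combination (√2 - 1) * h6 - (t (n+2)) * hs
    rw [h7, abs_mul]
    apply mul_le_mul_of_nonneg_right _ (abs_nonneg _)
    rw [abs_neg, abs_of_pos (by apply mul_pos h1; linarith)]
    nlinarith
  have bound : ∀ n, |t 2 - (√2 - 1)| ≤ (1 / 2) ^ n * |t (n + 2) - (√2 - 1)| := by
    intro n
    induction n with
    | zero => simp
    | succ n ih =>
      have := step n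
      calc _ ≤ _ := ih
        _ ≤ (1 / 2) ^ n * (1 / 2 * |t (n + 3) - (√2 - 1)|) := by gcongr
        _ = _ := by rw [pow_succ]; ring
  have b2 : ∀ n : ℕ, |t 2 - (√2 - 1)| ≤ (1 / 2 : ℝ) ^ n := by
    intro n
    refine (bound n).trans ?_
    obtain ⟨h1, h2, -⟩ := ht (n + 2)
    have : |t (n + 2) - (√2 - 1)| ≤ 1 := by
      rw [abs_le]; constructor <;> linarith
    nlinarith [pow_pos (show (0 : ℝ) < 1 / 2 by norm_num) n]
  have h2 : t 2 = √2 - 1 := by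
    have := ge_of_tendsto' (tendsto_pow_atTop_nhds_zero_of_lt_one (r := (1 / 2 : ℝ))
      (by norm_num) (by norm_num)) b2
    have := abs_eq_zero.1 (le_antisymm this (abs_nonneg _))
    linarith
  obtain ⟨p0, -, e0⟩ := ht 0
  obtain ⟨p1, -, e1⟩ := ht 1
  simp only [zero_add, ha1, ha2, h2, Nat.reduceAdd] at e0 e1
  push_cast at e0 e1
  have f1 : t 1 = 1 - √2 / 2 := by
    rw [div_eq_iff p1.ne'] at e1
    linear_combination (-(2 - √2) / 2) * e1 + t 1 / 2 * hs
  rw [div_eq_iff p0.ne', f1] at e0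
  rw [← ht0]
  linear_combination (-(4 + √2) / 7 ) * e0 + t 0 / 14 * hs

theorem freq_value (u : ℕ → Bool) (θ : ℝ) (hθ : HasSlope u θ) (h : θ = (4 + √2) / 7) :
    HasFreq u true rho := by
  obtain ⟨ra, rb, h1, h2, h3, h4⟩ := hθ
  have hs : √2 * √2 = 2 := Real.mul_self_sqrt (by norm_num)
  have hs0 : 0 ≤ √2 := Real.sqrt_nonneg 2
  have hsum : ra + rb = 1 := by
    have h5 := h1.add h2
    refine tendsto_nhds_unique h5 ?_
    refine tendsto_const_nhds.congr' ?_
    filter_upwards [eventually_gt_atTop 0] with n hn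
    have c1 := cb_factor u true 0 n
    have c2 := cb_factor u false 0 n
    have c3 := cb_sum u n
    rw [cb_zero] at c1 c2
    simp only [zero_add] at c1 c2
    rw [c1, c2]
    have hn' : (0 : ℝ) < n := by exact_mod_cast hn
    have c4 : (countBefore u true n : ℝ) + countBefore u false n = n := by exact_mod_cast c3
    rw [← add_div, eq_comm, div_eq_one_iff_eq hn'.ne']
    linarith
  have hb : rb = rho := by
    have hb0 : 0 < rb := by linarith
    rw [h, eq_div_iff hb0.ne'] at h4
    rw [rho]
    have h5 : rb * (11 + √2) = 7 := by linarith
    linear_combination ((11 - √2) / 119) * h5 + rb / 119 * hs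
  rw [← hb]
  exact h2

theorem rho_irr : Irrational rho := by
  unfold rho
  have h : Irrational ((11 : ℕ) - √2) := irrational_sqrt_two.natCast_sub 11
  have := h.div_natCast (m := 17) (by norm_num)
  exact_mod_cast this

/-! ### Part 4: diophantine approximation -/

theorem rho_bounds : 0.56386 < rho ∧ rho < 0.56388 := by
  have hs1 : (1.4142 : ℝ) < √2 := by
    apply Real.lt_sqrt_of_sq_lt; norm_num
  have hs2 : √2 < (1.4143 : ℝ) := by
    rw [Real.sqrt_lt' (by norm_num)]; norm_num
  unfold rho
  constructor <;> norm_num <;> linarith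

/-- every run of `T` consecutive orbit points meets every interval of length `δ` -/
def Hit (T : ℕ) (δ : ℝ) : Prop :=
  ∀ x : ℝ, ∃ k < T, ∃ n : ℤ, (n : ℝ) ≤ x + k * rho ∧ x + k * rho < n + δ

theorem hit_mono {T : ℕ} {δ δ' : ℝ} (h : Hit T δ) (hd : δ ≤ δ') : Hit T δ' := by
  intro x
  obtain ⟨k, hk, n, h1, h2⟩ := h x
  exact ⟨k, hk, n, h1, by linarith⟩

theorem hit_one : Hit 1 1 := by
  intro x
  refine ⟨0, by norm_num, ⌊x⌋, ?_, ?_⟩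
  · simpa using Int.floor_le x
  · simpa using Int.lt_floor_add_one x

theorem hit_step {T : ℕ} {δ δ' : ℝ} (h : Hit T δ) (q : ℕ) (s : ℤ)
    (h1 : |q * rho - s| ≤ δ') (h2 : δ - |q * rho - s| ≤ δ') (h3 : δ' ≤ δ) : Hit (T + q) δ' := by
  intro x
  rcases abs_cases (q * rho - s) with ⟨ha, hs⟩ | ⟨ha, hs⟩
  · rw [ha] at h1 h2
    obtain ⟨k, hk, n, a1, a2⟩ := h (x + (δ - δ'))
    by_cases hc : (n : ℝ) ≤ x + k * rho
    · exact ⟨k, by omega, n, hc, by linarith⟩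
    · push Not at hc
      refine ⟨k + q, by omega, n + s, ?_, ?_⟩
      · push_cast
        linarith
      · push_cast
        linarith
  · rw [ha] at h1 h2
    obtain ⟨k, hk, n, a1, a2⟩ := h x
    by_cases hc : x + k * rho < n + δ'
    · exact ⟨k, by omega, n, a1, hc⟩
    · push Not at hc
      refine ⟨k + q, by omega, n + s, ?_, ?_⟩
      · push_cast
        linarith
      · push_cast
        linarith

/-- convergent denominators and numerators -/
def cq : ℕ → ℕ
  | 0 => 2
  | 1 => 7
  | n + 2 => 2 * cq (n + 1) + cq n

def cs : ℕ → ℕ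
  | 0 => 1
  | 1 => 4
  | n + 2 => 2 * cs (n + 1) + cs n

noncomputable def eta (n : ℕ) : ℝ := (2 * rho - 1) * (√2 - 1) ^ n

theorem eps_eq (n : ℕ) : (cq n : ℝ) * rho - cs n = (2 * rho - 1) * (1 - √2) ^ n ∧
    (cq (n + 1) : ℝ) * rho - cs (n + 1) = (2 * rho - 1) * (1 - √2) ^ (n + 1) := by
  have hs : √2 * √2 = 2 := Real.mul_self_sqrt (by norm_num)
  induction n with
  | zero =>
    simp only [cq, cs, rho]
    push_cast
    constructor
    · ring
    · linear_combination (-(2 : ℝ) / 17) * hs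
  | succ n ih =>
    refine ⟨ih.2, ?_⟩
    simp only [cq, cs]
    push_cast
    have h3 : (1 - √2) ^ (n + 1 + 1) = 2 * (1 - √2) ^ (n + 1) + (1 - √2) ^ n := by
      rw [pow_succ, pow_succ]
      linear_combination (1 - √2) ^ n * hs
    rw [h3]
    linear_combination 2 * ih.2 + ih.1

theorem eps_abs (n : ℕ) : |(cq n : ℝ) * rho - ((cs n : ℤ) : ℝ)| = eta n := by
  have hs1 : (1 : ℝ) < √2 := by
    apply Real.lt_sqrt_of_sq_lt; norm_num
  have := rho_bounds
  rw [Int.cast_natCast, (eps_eq n).1, abs_mul, abs_pow, abs_of_pos (by linarith), abs_sub_comm,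
    abs_of_pos (by linarith)]
  rfl

theorem eta_pos (n : ℕ) : 0 < eta n := by
  have hs1 : (1 : ℝ) < √2 := by
    apply Real.lt_sqrt_of_sq_lt; norm_num
  have := rho_bounds
  unfold eta
  apply mul_pos (by linarith)
  apply pow_pos
  linarith

theorem eta_succ (n : ℕ) : eta (n + 1) = (√2 - 1) * eta n := by
  unfold eta
  rw [pow_succ]
  ring

theorem hit_two : Hit 2 0.5639 := by
  have := rho_bounds
  have e : |((1 : ℕ) : ℝ) * rho - ((1 : ℤ) : ℝ)| = 1 - rho := by
    rw [abs_of_neg (by push_cast; linarith)]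
    push_cast
    ring
  refine hit_step hit_one 1 1 ?_ ?_ ?_ <;> (try rw [e]) <;> norm_num <;> linarith

theorem hit_three : Hit 3 (1 - rho) := by
  have := rho_bounds
  have e : |((1 : ℕ) : ℝ) * rho - ((1 : ℤ) : ℝ)| = 1 - rho := by
    rw [abs_of_neg (by push_cast; linarith)]
    push_cast
    ring
  refine hit_step hit_two 1 1 ?_ ?_ ?_ <;> (try rw [e]) <;> norm_num <;> linarith

theorem two_abs : |((2 : ℕ) : ℝ) * rho - ((1 : ℤ) : ℝ)| = 2 * rho - 1 := by
  have := rho_bounds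
  rw [abs_of_pos (by push_cast; linarith)]
  push_cast
  ring

theorem hit_five : Hit 5 (2 - 3 * rho) := by
  have := rho_bounds
  refine hit_step hit_three 2 1 ?_ ?_ ?_ <;> (try rw [two_abs]) <;> linarith

theorem hit_seven : Hit 7 (3 - 5 * rho) := by
  have := rho_bounds
  refine hit_step hit_five 2 1 ?_ ?_ ?_ <;> (try rw [two_abs]) <;> linarith

theorem hit_nine : Hit 9 (2 * rho - 1) := by
  have := rho_bounds
  refine hit_step hit_seven 2 1 ?_ ?_ ?_ <;> (try rw [two_abs]) <;> linarith

theorem hit_eta (n : ℕ) : Hit (cq n + cq (n + 1)) (eta n) := by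
  have hs : √2 * √2 = 2 := Real.mul_self_sqrt (by norm_num)
  have hs1 : (1.4 : ℝ) < √2 := by
    apply Real.lt_sqrt_of_sq_lt; norm_num
  have hs2 : √2 < (1.5 : ℝ) := by
    rw [Real.sqrt_lt' (by norm_num)]; norm_num
  induction n with
  | zero =>
    have := hit_nine
    simpa [cq, eta] using this
  | succ n ih =>
    have hp := eta_pos n
    have e := eta_succ n
    have h1 : Hit (cq n + cq (n + 1) + cq (n + 1)) (eta n - eta (n + 1)) := by
      refine hit_step ih (cq (n + 1)) (cs (n + 1)) ?_ ?_ ?_ <;> (try rw [eps_abs]) <;> rw [e] <;>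
        nlinarith
    have h2 : Hit (cq n + cq (n + 1) + cq (n + 1) + cq (n + 1)) (eta (n + 1)) := by
      refine hit_step h1 (cq (n + 1)) (cs (n + 1)) ?_ ?_ ?_ <;> (try rw [eps_abs]) <;> rw [e] <;>
        nlinarith
    have : cq (n + 1) + cq (n + 1 + 1) = cq n + cq (n + 1) + cq (n + 1) + cq (n + 1) := by
      simp only [cq]
      ring
    rw [this]
    exact h2

/-- law of best approximation -/
theorem best_approx (q1 s1 q2 s2 : ℤ) (hq1 : 0 < q1) (hq2 : 0 < q2)
    (hdet : q1 * s2 - q2 * s1 = 1 ∨ q1 * s2 - q2 * s1 = -1)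
    (hsign : (q1 * rho - s1) * (q2 * rho - s2) < 0) (p P : ℤ) (hp : 0 < p) (hp2 : p < q2) :
    |q1 * rho - s1| ≤ |p * rho - P| := by
  obtain ⟨x, y, hx, hy⟩ : ∃ x y : ℤ, p = x * q1 + y * q2 ∧ P = x * s1 + y * s2 := by
    rcases hdet with h | h
    · exact ⟨p * s2 - P * q2, P * q1 - p * s1, by linear_combination (-p) * h,
        by linear_combination (-P) * h⟩
    · exact ⟨-(p * s2 - P * q2), -(P * q1 - p * s1), by linear_combination p * h,
        by linear_combination P * h⟩
  have he : (p : ℝ) * rho - P = x * (q1 * rho - s1) + y * (q2 * rho - s2) := by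
    rw [hx, hy]
    push_cast
    ring
  have hx0 : x ≠ 0 := by
    rintro rfl
    have : 0 < y := by nlinarith
    nlinarith
  have hxy : x * y ≤ 0 := by
    by_contra hc
    push Not at hc
    rcases pos_and_pos_or_neg_and_neg_of_mul_pos hc with ⟨h1, h2⟩ | ⟨h1, h2⟩
    · nlinarith
    · nlinarith
  rw [he]
  set E1 := (q1 : ℝ) * rho - s1
  set E2 := (q2 : ℝ) * rho - s2
  have hx1 : (1 : ℝ) ≤ (x : ℝ) ^ 2 := by
    have : 0 < x ^ 2 := by positivity
    exact_mod_cast this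
  have hxy' : (x : ℝ) * y ≤ 0 := by exact_mod_cast hxy
  apply abs_le_of_sq_le_sq' _ (abs_nonneg _) |> abs_le.2
  rw [sq_abs]
  have h3 : 0 ≤ ((x : ℝ) * y) * (E1 * E2) := mul_nonneg_of_nonpos_of_nonpos hxy' hsign.le
  nlinarith [sq_nonneg (y * E2), mul_nonneg (sub_nonneg.2 hx1) (sq_nonneg E1)]

theorem cq_det (n : ℕ) : ((cq n : ℤ) * cs (n + 1) - cq (n + 1) * cs n = 1 ∨
    (cq n : ℤ) * cs (n + 1) - cq (n + 1) * cs n = -1) := by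
  induction n with
  | zero => simp [cq, cs]
  | succ n ih =>
    simp only [cq, cs]
    push_cast
    rcases ih with h | h
    · right
      linear_combination -h
    · left
      linear_combination -h

theorem cq_pos (n : ℕ) : 0 < cq n ∧ 2 * cq n ≤ cq (n + 1) := by
  induction n with
  | zero => simp [cq]
  | succ n ih =>
    refine ⟨by omega, ?_⟩
    simp only [cq]
    omega

theorem approx_eta (n : ℕ) (p P : ℤ) (hp : 0 < p) (hp2 : p < cq (n + 1)) :
    eta n ≤ |p * rho - P| := by
  rw [← eps_abs]
  have hs1 : (1 : ℝ) < √2 := by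
    apply Real.lt_sqrt_of_sq_lt; norm_num
  have := rho_bounds
  have h := best_approx (cq n) (cs n) (cq (n + 1)) (cs (n + 1)) (by exact_mod_cast (cq_pos n).1)
    (by exact_mod_cast (cq_pos (n + 1)).1) (cq_det n) ?_ p P hp hp2
  · exact_mod_cast h
  · push_cast
    rw [(eps_eq n).1, (eps_eq n).2]
    have h1 : (2 * rho - 1) * (1 - √2) ^ n * ((2 * rho - 1) * (1 - √2) ^ (n + 1)) =
      (2 * rho - 1) ^ 2 * (((1 - √2) ^ n) ^ 2 * (1 - √2)) := by
      rw [pow_succ]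
      ring
    rw [h1]
    apply mul_neg_of_pos_of_neg
    · apply pow_pos
      linarith
    · apply mul_neg_of_pos_of_neg
      · apply sq_pos_of_ne_zero
        apply pow_ne_zero
        linarith
      · linarith

theorem approx_one (P : ℤ) : 1 - rho ≤ |((1 : ℤ) : ℝ) * rho - P| := by
  have := rho_bounds
  have h := best_approx 1 1 2 1 (by norm_num) (by norm_num) (by norm_num) (by
    push_cast; nlinarith) 1 P (by norm_num) (by norm_num)
  rw [abs_of_neg (by push_cast; linarith)] at h
  push_cast at h ⊢
  linarith

/-- A run on which translation by `e` does not change the floor must be short. -/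
theorem avoid {T : ℕ} {δ : ℝ} (h : Hit T δ) (x e : ℝ) (he : δ ≤ |e|) (m : ℕ)
    (hm : ∀ k ≤ m, ⌊x + k * rho + e⌋ = ⌊x + k * rho⌋) : m + 1 < T := by
  by_contra hc
  push Not at hc
  rcases abs_cases e with ⟨ha, hs⟩ | ⟨ha, hs⟩
  · obtain ⟨k, hk, n, h1, h2⟩ := h (x + e)
    have := hm k (by omega)
    have h3 : n ≤ ⌊x + k * rho + e⌋ := Int.le_floor.2 (by linarith)
    have h4 : ⌊x + k * rho⌋ < n := Int.floor_lt.2 (by linarith)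
    omega
  · obtain ⟨k, hk, n, h1, h2⟩ := h x
    have := hm k (by omega)
    have h3 : n ≤ ⌊x + k * rho⌋ := Int.le_floor.2 (by linarith)
    have h4 : ⌊x + k * rho + e⌋ < n := Int.floor_lt.2 (by linarith)
    omega

theorem main_ineq (x : ℝ) (p : ℕ) (P : ℤ) (hp : 0 < p) (m : ℕ)
    (hm : ∀ k ≤ m, ⌊x + k * rho + (6 * p * rho - 6 * P)⌋ = ⌊x + k * rho⌋) :
    10 * m ≤ 6 * p := by
  have hb := rho_bounds
  have hs : √2 * √2 = 2 := Real.mul_self_sqrt (by norm_num)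
  have hs1 : (1.41 : ℝ) < √2 := by
    apply Real.lt_sqrt_of_sq_lt; norm_num
  have hs2 : √2 < (1.415 : ℝ) := by
    rw [Real.sqrt_lt' (by norm_num)]; norm_num
  have e6 : |(6 * p * rho - 6 * P : ℝ)| = 6 * |((p : ℤ) : ℝ) * rho - P| := by
    rw [show (6 * p * rho - 6 * P : ℝ) = 6 * (((p : ℤ) : ℝ) * rho - P) by push_cast; ring, abs_mul]
    norm_num
  have hav := fun (T : ℕ) (δ : ℝ) (h : Hit T δ) (he : δ ≤ 6 * |((p : ℤ) : ℝ) * rho - P|) =>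
    avoid h x _ (e6 ▸ he) m hm
  by_cases h1 : p = 1
  · subst h1
    have := approx_one P
    have := hav 1 1 hit_one (by push_cast at this ⊢; linarith)
    omega
  by_cases h7 : p < 7
  · have := approx_eta 0 p P (by omega) (by simp [cq]; omega)
    have := hav 2 _ hit_two (by norm_num [eta] at this ⊢; linarith)
    omega
  by_cases h16 : p < 16
  · have h := approx_eta 1 p P (by omega) (by simp [cq]; omega)
    have := hav 5 _ hit_five (by
      refine le_trans ?_ (mul_le_mul_of_nonneg_left h (by norm_num))
      unfold eta
      nlinarith)
    omega
  obtain ⟨n, hn1, hn2⟩ : ∃ n, cq (n + 2) ≤ p ∧ p < cq (n + 3) := by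
    have hgrow : ∀ n, n < cq n := by
      intro n
      induction n with
      | zero => simp [cq]
      | succ n ih =>
        have := (cq_pos n).2
        omega
    have hex : ∃ n, p < cq (n + 3) := ⟨p, by have := hgrow (p + 3); omega⟩
    classical
    refine ⟨Nat.find hex, ?_, Nat.find_spec hex⟩
    rcases Nat.eq_zero_or_pos (Nat.find hex) with h0 | h0
    · rw [h0]
      simp [cq]
      omega
    · have := Nat.find_min hex (m := Nat.find hex - 1) (by omega)
      push Not at this
      rwa [show Nat.find hex - 1 + 3 = Nat.find hex + 2 by omega] at this
  have h := approx_eta (n + 2) p P (by omega) (by exact_mod_cast hn2)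
  have h6 : 1 ≤ 6 * ((√2 - 1) * (√2 - 1)) := by nlinarith
  have hle : eta n ≤ 6 * eta (n + 2) := by
    rw [eta_succ, eta_succ]
    nlinarith [eta_pos n]
  have := hav _ _ (hit_eta n) (hle.trans (mul_le_mul_of_nonneg_left h (by norm_num)))
  have h2 := (cq_pos n).2
  have h3 : cq (n + 2) = 2 * cq (n + 1) + cq n := by simp only [cq]
  omega

/-! ### Part 5: the colouring -/

theorem cyc_eq (t : ℕ) (c : ZMod 6) : cyc 6 t = c ↔ t % 6 = c.val := by
  unfold cyc
  rw [← ZMod.val_natCast]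
  exact ⟨fun h => by rw [h], fun h => ZMod.val_injective 6 h⟩

theorem col_true (u : ℕ → Bool) (i : ℕ) (h : u i = true) :
    colourCyc 6 u i = Sum.inr (cyc 6 (countBefore u true i)) := by
  simp [colourCyc, colour, h]

theorem col_false (u : ℕ → Bool) (i : ℕ) (h : u i = false) :
    colourCyc 6 u i = Sum.inl (cyc 6 (countBefore u false i)) := by
  simp [colourCyc, colour, h]

/-- letter count with respect to decidable equality -/
def dcount {γ : Type*} [DecidableEq γ] (l : List γ) (a : γ) : ℕ := l.count a

theorem dcount_cons {γ : Type*} [DecidableEq γ] (x : γ) (l : List γ) (a : γ) :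
    dcount (x :: l) a = dcount l a + if x = a then 1 else 0 := by
  simp [dcount, List.count_cons]

theorem dcount_nil {γ : Type*} [DecidableEq γ] (a : γ) : dcount ([] : List γ) a = 0 := rfl

theorem count_inr (u : ℕ → Bool) (c : ZMod 6) (i n : ℕ) :
    (countBefore u true i + 5 - c.val) / 6 + dcount (factorAt (colourCyc 6 u) i n) (Sum.inr c) =
    (countBefore u true (i + n) + 5 - c.val) / 6 := by
  have hc : c.val < 6 := ZMod.val_lt c
  induction n generalizing i with
  | zero => simp [factorAt, dcount_nil]
  | succ n ih =>
    have h := ih (i + 1)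
    rw [cb_succ] at h
    rw [factorAt_succ, dcount_cons, show i + (n + 1) = i + 1 + n by omega, ← h]
    cases hu : u i
    · rw [col_false u i hu]
      simp [hu]
    · rw [col_true u i hu]
      simp only [hu, Sum.inr.injEq, cyc_eq, if_true]
      split_ifs with h6 <;> omega

theorem count_inl (u : ℕ → Bool) (c : ZMod 6) (i n : ℕ) :
    (countBefore u false i + 5 - c.val) / 6 + dcount (factorAt (colourCyc 6 u) i n) (Sum.inl c) =
    (countBefore u false (i + n) + 5 - c.val) / 6 := by
  have hc : c.val < 6 := ZMod.val_lt c
  induction n generalizing i with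
  | zero => simp [factorAt, dcount_nil]
  | succ n ih =>
    have h := ih (i + 1)
    rw [cb_succ] at h
    rw [factorAt_succ, dcount_cons, show i + (n + 1) = i + 1 + n by omega, ← h]
    cases hu : u i
    · rw [col_false u i hu]
      simp only [hu, Sum.inl.injEq, cyc_eq, if_true]
      split_ifs with h6 <;> omega
    · rw [col_true u i hu]
      simp [hu]

theorem colour_balanced (u : ℕ → Bool) (h : LSP u) : Balanced (colourCyc 6 u) := by
  intro a v w hv hw hl
  obtain ⟨i, hi⟩ := hv
  obtain ⟨j, hj⟩ := hw
  rw [← hi, ← hj, ← hl]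
  generalize v.length = n
  change |((dcount (factorAt (colourCyc 6 u) i n) a : ℕ) : ℤ) -
    ((dcount (factorAt (colourCyc 6 u) j n) a : ℕ) : ℤ)| ≤ 1
  have b1 := cb_bal u h n i j
  have b2 := cb_bal u h n j i
  have s1 := cb_sum u i
  have s2 := cb_sum u j
  have s3 := cb_sum u (i + n)
  have s4 := cb_sum u (j + n)
  cases a with
  | inl c =>
    have hc : c.val < 6 := ZMod.val_lt c
    have c1 := count_inl u c i n
    have c2 := count_inl u c j n
    rw [abs_le]
    constructor <;> omega
  | inr c =>
    have hc : c.val < 6 := ZMod.val_lt c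
    have c1 := count_inr u c i n
    have c2 := count_inr u c j n
    rw [abs_le]
    constructor <;> omega

theorem cb_mono (u : ℕ → Bool) (c : Bool) {i j : ℕ} (h : i ≤ j) :
    countBefore u c i ≤ countBefore u c j := by
  obtain ⟨n, rfl⟩ := Nat.exists_eq_add_of_le h
  rw [← cb_factor]
  omega

theorem col_eq (u : ℕ → Bool) (i j : ℕ) (h : colourCyc 6 u i = colourCyc 6 u j) :
    u i = u j ∧ countBefore u (u i) i % 6 = countBefore u (u i) j % 6 := by
  have key : ∀ a b : ℕ, cyc 6 a = cyc 6 b → a % 6 = b % 6 := by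
    intro a b hab
    rw [cyc_eq] at hab
    rw [hab, cyc, ZMod.val_natCast]
  cases hi : u i <;> cases hj : u j
  · rw [col_false u i hi, col_false u j hj] at h
    exact ⟨rfl, key _ _ (Sum.inl.inj h)⟩
  · rw [col_false u i hi, col_true u j hj] at h
    cases h
  · rw [col_true u i hi, col_false u j hj] at h
    cases h
  · rw [col_true u i hi, col_true u j hj] at h
    exact ⟨rfl, key _ _ (Sum.inr.inj h)⟩

theorem overlap_bound (u : ℕ → Bool)
    (hfl : ∀ n : ℕ, (countBefore u true n : ℤ) = ⌊((n : ℝ) + 1) * rho⌋)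
    (i p m : ℕ) (hp : 0 < p) (hm0 : 0 < m)
    (hx : ∀ k < m, colourCyc 6 u (i + k) = colourCyc 6 u (i + k + p)) : 10 * m ≤ p := by
  have hb := rho_bounds
  -- comparing counts with reals
  have hlo : ∀ n : ℕ, (countBefore u true n : ℝ) ≤ ((n : ℝ) + 1) * rho := by
    intro n
    have := Int.floor_le (((n : ℝ) + 1) * rho)
    rw [← hfl n] at this
    exact_mod_cast this
  have hhi : ∀ n : ℕ, ((n : ℝ) + 1) * rho < (countBefore u true n : ℝ) + 1 := by
    intro n
    have := Int.lt_floor_add_one (((n : ℝ) + 1) * rho)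
    rw [← hfl n] at this
    exact_mod_cast this
  obtain ⟨P, hP⟩ := Nat.exists_eq_add_of_le (cb_mono u true (show i ≤ i + p by omega))
  obtain ⟨Q, hQ⟩ := Nat.exists_eq_add_of_le (cb_mono u false (show i ≤ i + p by omega))
  have hPQ : P + Q = p := by
    have := cb_sum u i
    have := cb_sum u (i + p)
    omega
  have hcount : ∀ k ≤ m, countBefore u true (i + k + p) = countBefore u true (i + k) + P ∧
      countBefore u false (i + k + p) = countBefore u false (i + k) + Q := by
    intro k
    induction k with
    | zero =>
      intro _
      exact ⟨hP, hQ⟩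
    | succ k ih =>
      intro hk
      have h1 := ih (by omega)
      have h2 := (col_eq u _ _ (hx k (by omega))).1
      rw [show i + (k + 1) + p = i + k + p + 1 by omega, show i + (k + 1) = i + k + 1 by omega,
        cb_succ, cb_succ, cb_succ, cb_succ, h2]
      omega
  have hT : ∀ k < m, u (i + k) = true → P % 6 = 0 := by
    intro k hk hu
    have h1 := (col_eq u _ _ (hx k hk)).2
    rw [hu, (hcount k hk.le).1] at h1
    omega
  have hF : ∀ k < m, u (i + k) = false → Q % 6 = 0 := by
    intro k hk hu
    have h1 := (col_eq u _ _ (hx k hk)).2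
    rw [hu, (hcount k hk.le).2] at h1
    omega
  by_cases hboth : P % 6 = 0 ∧ Q % 6 = 0
  · obtain ⟨P', rfl⟩ : ∃ P', P = 6 * P' := ⟨P / 6, by omega⟩
    obtain ⟨p', rfl⟩ : ∃ p', p = 6 * p' := ⟨p / 6, by omega⟩
    refine main_ineq (((i : ℝ) + 1) * rho) p' P' (by omega) m ?_
    intro k hk
    have h1 := hfl (i + k)
    have h2 := hfl (i + k + 6 * p')
    rw [(hcount k hk).1] at h2
    rw [show ((i : ℝ) + 1) * rho + k * rho = (((i + k : ℕ) : ℝ) + 1) * rho by push_cast; ring, ← h1]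
    rw [show (((i + k : ℕ) : ℝ) + 1) * rho + (6 * p' * rho - 6 * (P' : ℤ)) =
      (((i + k + 6 * p' : ℕ) : ℝ) + 1) * rho - ((6 * P' : ℕ) : ℝ) by push_cast; ring,
      Int.floor_sub_natCast, ← h2]
    push_cast
    ring
  · have hi := cb_succ u true i
    have hi2 := cb_succ u true (i + 1)
    have hi3 := cb_succ u true (i + 2)
    have fi := cb_succ u false i
    have mT := cb_mono u true (show i + 1 ≤ i + p by omega)
    have mF := cb_mono u false (show i + 1 ≤ i + p by omega)
    have l0 := hlo i
    have h0 := hhi i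
    rcases Nat.lt_or_ge 1 m with hm1 | hm1
    · -- at least two letters
      cases hu0 : u i
      · cases hu1 : u (i + 1)
        · exfalso
          rw [if_neg (by simp [hu0])] at hi
          rw [if_neg (by simp [hu1])] at hi2
          have h2 := hhi (i + 1 + 1)
          rw [hi2, hi] at h2
          push_cast at h2
          linarith
        · exact absurd ⟨hT 1 hm1 hu1, hF 0 hm0 hu0⟩ hboth
      · cases hu1 : u (i + 1)
        · exact absurd ⟨hT 0 hm0 hu0, hF 1 hm1 hu1⟩ hboth
        · have hP6 := hT 0 hm0 hu0
          rw [if_pos (by simp [hu0])] at hi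
          rw [if_pos (by simp [hu1])] at hi2
          rcases Nat.lt_or_ge 2 m with hm2 | hm2
          · cases hu2 : u (i + 2)
            · exact absurd ⟨hP6, hF 2 hm2 hu2⟩ hboth
            · exfalso
              rw [if_pos (by simp [hu2])] at hi3
              have h3 := hlo (i + 2 + 1)
              rw [hi3, show i + 2 = i + 1 + 1 by omega, hi2, hi] at h3
              push_cast at h3
              linarith
          · have hm : m = 2 := by omega
            have h2 := (hcount 2 (by omega)).1
            have l2 := hlo (i + 1 + 1)
            rw [hi2, hi] at l2
            rw [show i + 2 = i + 1 + 1 by omega, hi2, hi] at h2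
            have l3 := hlo (i + 1 + 1 + p)
            rw [h2] at l3
            have h4 := hhi (i + p)
            rw [hP] at h4
            push_cast at l2 l3 h4
            rw [hm]
            by_contra hcon
            have hp19 : (p : ℝ) ≤ 19 := by
              have : p ≤ 19 := by omega
              exact_mod_cast this
            rcases Nat.lt_or_ge 6 P with hP7 | hP7
            · have : (12 : ℝ) ≤ P := by
                have : 12 ≤ P := by omega
                exact_mod_cast this
              nlinarith
            · have : P = 6 := by omega
              subst this
              push_cast at *
              rcases Nat.lt_or_ge p 11 with h10 | h11
              · have : (p : ℝ) ≤ 10 := by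
                  have : p ≤ 10 := by omega
                  exact_mod_cast this
                nlinarith
              · have : (11 : ℝ) ≤ p := by exact_mod_cast h11
                nlinarith
    · have hm : m = 1 := by omega
      subst hm
      by_contra hcon
      have hp9 : (p : ℝ) ≤ 9 := by
        have : p ≤ 9 := by omega
        exact_mod_cast this
      have h1 := hcount 1 le_rfl
      cases hu0 : u i
      · have hQ6 := hF 0 hm0 hu0
        rw [if_neg (by simp [hu0])] at hi
        rw [if_pos (by simp [hu0])] at fi
        have hle : P + 6 ≤ p := by omega
        have hle' : (P : ℝ) + 6 ≤ p := by exact_mod_cast hle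
        have h2 := hhi (i + 1 + p)
        rw [h1.1, hi] at h2
        push_cast at h2
        nlinarith
      · have hP6 := hT 0 hm0 hu0
        rw [if_pos (by simp [hu0])] at hi
        have hle : 6 ≤ P := by omega
        have hle' : (6 : ℝ) ≤ P := by exact_mod_cast hle
        have h2 := hlo (i + 1 + p)
        rw [h1.1, hi] at h2
        push_cast at h2
        nlinarith

theorem getElem_factorAt (v : ℕ → α) (i n k : ℕ) (h : k < n) :
    (factorAt v i n)[k]? = some (v (i + k)) := by
  simp [factorAt, h]

theorem minPeriod_spec (z : List α) (hz : z ≠ []) :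
    IsPeriod z (minPeriod z) ∧ minPeriod z ≤ z.length := by
  have h : IsPeriod z z.length := ⟨List.length_pos_iff.2 hz, fun i hi => by omega⟩
  exact ⟨Nat.sInf_mem (s := {p | IsPeriod z p}) ⟨_, h⟩, Nat.sInf_le h⟩

theorem crit_value (u : ℕ → Bool)
    (hfl : ∀ n : ℕ, (countBefore u true n : ℤ) = ⌊((n : ℝ) + 1) * rho⌋) :
    criticalExponent (colourCyc 6 u) = (11 : ℝ≥0∞) / 10 := by
  have hb := rho_bounds
  apply le_antisymm
  · unfold criticalExponent
    refine iSup₂_le ?_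
    rintro z ⟨⟨i, hi⟩, hz⟩
    obtain ⟨⟨hp0, hper⟩, hpl⟩ := minPeriod_spec z hz
    unfold expE
    generalize minPeriod z = p at hp0 hper hpl
    have key : 10 * z.length ≤ 11 * p := by
      rcases Nat.lt_or_ge p z.length with hlt | hge
      · have := overlap_bound u hfl i p (z.length - p) hp0 (by omega) (by
          intro k hk
          have h1 := hper k (by omega)
          rw [← hi, getElem_factorAt _ _ _ _ (by omega), getElem_factorAt _ _ _ _ (by omega)] at h1
          rw [Option.some.inj h1]
          congr 1
          omega)
        omega
      · omega
    have key' : (10 : ℝ≥0∞) * z.length ≤ 11 * p := by exact_mod_cast key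
    have hp' : (p : ℝ≥0∞) ≠ 0 := by
      have : p ≠ 0 := by omega
      exact_mod_cast this
    rw [ENNReal.div_le_iff hp' (ENNReal.natCast_ne_top p), mul_comm, ← mul_div_assoc, mul_comm,
      ENNReal.le_div_iff_mul_le (by simp) (by simp), mul_comm]
    exact key'
  · have val : ∀ n k : ℕ, (k : ℝ) ≤ ((n : ℝ) + 1) * rho → ((n : ℝ) + 1) * rho < k + 1 →
        countBefore u true n = k := by
      intro n k h1 h2
      have h3 : ⌊((n : ℝ) + 1) * rho⌋ = (k : ℤ) := by
        rw [Int.floor_eq_iff]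
        exact ⟨by exact_mod_cast h1, by exact_mod_cast h2⟩
      have := hfl n
      omega
    have v4 := val 4 2 (by norm_num; linarith) (by norm_num; linarith)
    have v5 := val 5 3 (by norm_num; linarith) (by norm_num; linarith)
    have v14 := val 14 8 (by norm_num; linarith) (by norm_num; linarith)
    have v15 := val 15 9 (by norm_num; linarith) (by norm_num; linarith)
    rw [cb_succ] at v5 v15
    have u4 : u 4 = true := by
      by_contra h
      rw [if_neg h] at v5
      omega
    have u14 : u 14 = true := by
      by_contra h
      rw [if_neg h] at v15
      omega
    have hcol : colourCyc 6 u 4 = colourCyc 6 u 14 := by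
      rw [col_true u 4 u4, col_true u 14 u14, v4, v14]
      rfl
    set z := factorAt (colourCyc 6 u) 4 11 with hzdef
    have hlen : z.length = 11 := factorAt_length _ _ _
    have hper : IsPeriod z 10 := by
      refine ⟨by norm_num, ?_⟩
      intro k hk
      have hk0 : k = 0 := by omega
      subst hk0
      rw [hzdef, getElem_factorAt _ _ _ _ (by omega), getElem_factorAt _ _ _ _ (by omega)]
      exact congrArg some hcol
    have hz : z ≠ [] := by
      intro h
      rw [h] at hlen
      simp at hlen
    have hle : minPeriod z ≤ 10 := Nat.sInf_le hper
    have hfac : IsFactor (colourCyc 6 u) z := ⟨4, by rw [hlen]⟩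
    refine le_trans ?_ (le_iSup₂ (f := fun z (_ : IsFactor (colourCyc 6 u) z ∧ z ≠ []) => expE z)
      z ⟨hfac, hz⟩)
    unfold expE
    rw [hlen]
    have hle' : (minPeriod z : ℝ≥0∞) ≤ 10 := by exact_mod_cast hle
    exact ENNReal.div_le_div (by norm_num) hle'

theorem statement17 (u : ℕ → Bool) (hu : IsStandard u)
    (θ : ℝ) (hθ : HasSlope u θ) (a : ℕ → ℕ) (hcf : HasCF θ a)
    (ha1 : a 1 = 1) (ha2 : a 2 = 3) (ha : ∀ n, 3 ≤ n → a n = 2) :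
    Balanced (colourCyc 6 u) ∧
    Nat.card (ZMod 6 ⊕ ZMod 6) = 12 ∧
    criticalExponent (colourCyc 6 u) = (11 : ℝ≥0∞) / 10 := by
  have h := lsp_of_standard u hu
  have hfr := freq_value u θ hθ (cf_value θ a hcf ha1 ha2 ha)
  refine ⟨colour_balanced u h, ?_, crit_value u (cb_floor u h rho hfr rho_irr)⟩
  rw [Nat.card_sum, Nat.card_zmod]

end BalancedCE
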